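/- Let A be the 4×6 matrix over ℕ with rows (1,1,1,0,0,0), (0,3,2,1,0,0), (5,0,2,0,1,0), (0,2,1,0,0,1), let π : ℕ⁶ → ℕ⁴ be π(u) = Au, and let b₁ = (1,3,5,2)ᵀ, b₂ = (5,10,10,6)ᵀ. Then: (i) π⁻¹(b₁) = {(1,0,0,3,0,2), (0,1,0,0,5,0), (0,0,1,1,3,1)} and π⁻¹(b₂) = {(0,0,5,0,0,1), (1,2,2,0,1,0), (2,3,0,1,0,0)}; (ii) the convex hulls satisfy P_{b₁+b₂} = P_{b₁} + P_{b₂} (Minkowski sum in ℝ⁶); and (iii) the vector u = (1,1,4,2,2,2) satisfies Au = b₁ + b₂, but there do not exist u₁ ∈ π⁻¹(b₁) and u₂ ∈ π⁻¹(b₂) with u = u₁ + u₂. -/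

import Mathlib

open Pointwise

/-- The matrix of the example. -/
def exA : Matrix (Fin 4) (Fin 6) ℕ :=
  !![1, 1, 1, 0, 0, 0;
     0, 3, 2, 1, 0, 0;
     5, 0, 2, 0, 1, 0;
     0, 2, 1, 0, 0, 1]

/-- The fiber polytope `P_b = conv(π⁻¹(b)) ⊆ ℝ⁶`. -/
def exP (b : Fin 4 → ℕ) : Set (Fin 6 → ℝ) :=
  convexHull ℝ ((fun u : Fin 6 → ℕ => fun i => (u i : ℝ)) ''
    { u : Fin 6 → ℕ | exA.mulVec u = b })

/-!
Within a fiber of `exA`, a vector is determined by its first two coordinates, and the fiber becomes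
the set of lattice points of a polygon. The fibers of `b₁ = (1,3,5,2)` and `b₂ = (5,10,10,6)` become
the vertices `(1,0), (0,1), (0,0)` and `(0,0), (1,2), (2,3)` of two triangles, and the fiber of
`b₁ + b₂` consists of the nine pairwise sums together with the single point `(1,1)`. This point is
not a sum, but it is the midpoint of the sums `(1,0) + (0,0)` and `(0,0) + (1,2)`, so it does not
enlarge the convex hull.
-/

theorem map_mem_convexHull_image_of_two_nsmul_eq_add {𝕜 M E : Type*} [Field 𝕜] [LinearOrder 𝕜]
    [IsStrictOrderedRing 𝕜] [AddMonoid M] [AddCommGroup E] [Module 𝕜 E] (φ : M →+ E) {s : Set M}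
    {u v w : M} (hv : v ∈ s) (hw : w ∈ s) (h : 2 • u = v + w) :
    φ u ∈ convexHull 𝕜 (φ '' s) := by
  have h_mid : midpoint 𝕜 (φ v) (φ w) = φ u := by
    rw [midpoint_eq_smul_add, ← map_add, ← h, map_nsmul, two_nsmul, ← two_smul 𝕜,
      invOf_smul_smul]
  exact h_mid ▸ (convex_convexHull 𝕜 _).midpoint_mem
    (subset_convexHull 𝕜 _ ⟨v, hv, rfl⟩) (subset_convexHull 𝕜 _ ⟨w, hw, rfl⟩)

/-- The fiber `π⁻¹(b)` of `π(u) = Au` over natural number vectors. -/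
def latticeFiber {m n : Type*} [Fintype n] (A : Matrix m n ℕ) (b : m → ℕ) : Set (n → ℕ) :=
  {u | A.mulVec u = b}

/-- The inclusion `ℕⁿ → ℝⁿ`, as an additive homomorphism. -/
def natVecCast (n : Type*) : (n → ℕ) →+ (n → ℝ) :=
  (Nat.castAddMonoidHom ℝ).compLeft n

section FiberPolytope

variable {m n : Type*} [Fintype n]

/-- The fiber polytope `P_b ⊆ ℝⁿ`: the convex hull of the fiber `π⁻¹(b)`. It unfolds
to `exP b` for the matrix `exA`. -/
def fiberPolytope (A : Matrix m n ℕ) (b : m → ℕ) : Set (n → ℝ) :=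
  convexHull ℝ (natVecCast n '' latticeFiber A b)

theorem latticeFiber_add_subset (A : Matrix m n ℕ) (b c : m → ℕ) :
    latticeFiber A b + latticeFiber A c ⊆ latticeFiber A (b + c) := by
  rintro _ ⟨v, hv : A.mulVec v = b, w, hw : A.mulVec w = c, rfl⟩
  exact (A.mulVec_add v w).trans (congrArg₂ (· + ·) hv hw)

theorem fiberPolytope_add_of_forall_mem_convexHull {A : Matrix m n ℕ} {b c : m → ℕ}
    (h : ∀ u ∈ latticeFiber A (b + c),
      natVecCast n u ∈ convexHull ℝ (natVecCast n '' (latticeFiber A b + latticeFiber A c))) :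
    fiberPolytope A (b + c) = fiberPolytope A b + fiberPolytope A c := by
  unfold fiberPolytope
  rw [← convexHull_add, ← Set.image_add]
  exact (convexHull_min (Set.image_subset_iff.2 h) (convex_convexHull ℝ _)).antisymm
    (convexHull_mono (Set.image_mono (latticeFiber_add_subset A b c)))

end FiberPolytope

local notation "b₁" => (![1, 3, 5, 2] : Fin 4 → ℕ)

local notation "b₂" => (![5, 10, 10, 6] : Fin 4 → ℕ)

theorem mem_latticeFiber_exA {u : Fin 6 → ℕ} {b : Fin 4 → ℕ} :
    u ∈ latticeFiber exA b ↔
      u 0 + u 1 + u 2 = b 0 ∧ 3 * u 1 + 2 * u 2 + u 3 = b 1 ∧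
        5 * u 0 + 2 * u 2 + u 4 = b 2 ∧ 2 * u 1 + u 2 + u 5 = b 3 := by
  simp [latticeFiber, funext_iff, Fin.forall_fin_succ, exA, dotProduct, Fin.sum_univ_six]

theorem injOn_latticeFiber_exA (b : Fin 4 → ℕ) :
    Set.InjOn (fun u ↦ (u 0, u 1)) (latticeFiber exA b) := by
  intro u hu v hv huv
  rw [mem_latticeFiber_exA] at hu hv
  obtain ⟨h₀, h₁⟩ := Prod.mk.inj huv
  have h₂ : u 2 = v 2 := by omega
  have h₃ : u 3 = v 3 := by omega
  have h₄ : u 4 = v 4 := by omega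
  have h₅ : u 5 = v 5 := by omega
  ext i
  fin_cases i
  exacts [h₀, h₁, h₂, h₃, h₄, h₅]

theorem latticeFiber_exA_eq_of_forall_exists {b : Fin 4 → ℕ} {s : Set (Fin 6 → ℕ)}
    (hs : s ⊆ latticeFiber exA b)
    (h : ∀ u ∈ latticeFiber exA b, ∃ v ∈ s, u 0 = v 0 ∧ u 1 = v 1) : latticeFiber exA b = s := by
  refine Set.Subset.antisymm (fun u hu ↦ ?_) hs
  obtain ⟨v, hv, h₀, h₁⟩ := h u hu
  exact injOn_latticeFiber_exA b hu (hs hv) (Prod.ext h₀ h₁) ▸ hv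

theorem latticeFiber_exA_b₁ : latticeFiber exA b₁ =
    {![1, 0, 0, 3, 0, 2], ![0, 1, 0, 0, 5, 0], ![0, 0, 1, 1, 3, 1]} := by
  refine latticeFiber_exA_eq_of_forall_exists ?_ fun u hu ↦ ?_
  · rintro _ (rfl | rfl | rfl) <;> simp [mem_latticeFiber_exA]
  · rw [mem_latticeFiber_exA] at hu
    simp only [Matrix.cons_val] at hu
    have h_coords : (u 0 = 1 ∧ u 1 = 0) ∨ (u 0 = 0 ∧ u 1 = 1) ∨ (u 0 = 0 ∧ u 1 = 0) := by
      omega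
    simpa using h_coords

theorem latticeFiber_exA_b₂ : latticeFiber exA b₂ =
    {![0, 0, 5, 0, 0, 1], ![1, 2, 2, 0, 1, 0], ![2, 3, 0, 1, 0, 0]} := by
  refine latticeFiber_exA_eq_of_forall_exists ?_ fun u hu ↦ ?_
  · rintro _ (rfl | rfl | rfl) <;> simp [mem_latticeFiber_exA]
  · rw [mem_latticeFiber_exA] at hu
    simp only [Matrix.cons_val] at hu
    have h_coords : (u 0 = 0 ∧ u 1 = 0) ∨ (u 0 = 1 ∧ u 1 = 2) ∨ (u 0 = 2 ∧ u 1 = 3) := by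
      omega
    simpa using h_coords

theorem latticeFiber_exA_b₁_add_b₂ : latticeFiber exA (b₁ + b₂) =
    insert ![1, 1, 4, 2, 2, 2] (latticeFiber exA b₁ + latticeFiber exA b₂) := by
  refine latticeFiber_exA_eq_of_forall_exists
    (Set.insert_subset ?_ (latticeFiber_add_subset exA b₁ b₂)) fun u hu ↦ ?_
  · simp [mem_latticeFiber_exA]
  · rw [mem_latticeFiber_exA] at hu
    simp only [Pi.add_apply, Matrix.cons_val] at hu
    have h_coords : (u 0 = 1 ∧ u 1 = 1) ∨ ∃ v ∈ latticeFiber exA b₁, ∃ w ∈ latticeFiber exA b₂,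
        u 0 = v 0 + w 0 ∧ u 1 = v 1 + w 1 := by
      simp only [latticeFiber_exA_b₁, latticeFiber_exA_b₂, Set.exists_mem_insert,
        Set.mem_singleton_iff, exists_eq_left, Matrix.cons_val]
      omega
    rw [Set.exists_mem_insert]
    refine h_coords.imp_right ?_
    rintro ⟨v, hv, w, hw, h⟩
    exact ⟨v + w, Set.add_mem_add hv hw, h⟩

theorem notMem_latticeFiber_exA_b₁_add_b₂ :
    ![1, 1, 4, 2, 2, 2] ∉ latticeFiber exA b₁ + latticeFiber exA b₂ := by
  simp [Set.mem_add, latticeFiber_exA_b₁, latticeFiber_exA_b₂]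

theorem fiberPolytope_exA_b₁_add_b₂ :
    fiberPolytope exA (b₁ + b₂) = fiberPolytope exA b₁ + fiberPolytope exA b₂ := by
  refine fiberPolytope_add_of_forall_mem_convexHull fun u hu ↦ ?_
  rw [latticeFiber_exA_b₁_add_b₂] at hu
  obtain rfl | hu := hu
  · have h₁ : ![1, 0, 0, 3, 0, 2] + ![0, 0, 5, 0, 0, 1] ∈
        latticeFiber exA b₁ + latticeFiber exA b₂ :=
      Set.add_mem_add (by simp [latticeFiber_exA_b₁]) (by simp [latticeFiber_exA_b₂])
    have h₂ : ![0, 0, 1, 1, 3, 1] + ![1, 2, 2, 0, 1, 0] ∈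
        latticeFiber exA b₁ + latticeFiber exA b₂ :=
      Set.add_mem_add (by simp [latticeFiber_exA_b₁]) (by simp [latticeFiber_exA_b₂])
    exact map_mem_convexHull_image_of_two_nsmul_eq_add _ h₁ h₂ (by decide)
  · exact subset_convexHull ℝ _ (Set.mem_image_of_mem _ hu)

/-- **A fiber atomic in the strong sense but not in the original sense.**
With `b₁ = (1,3,5,2)ᵀ` and `b₂ = (5,10,10,6)ᵀ`: (i) the fibers `π⁻¹(b₁)` and
`π⁻¹(b₂)` are the stated three-element sets; (ii) `P_{b₁+b₂} = P_{b₁} + P_{b₂}`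
as a Minkowski sum; (iii) `u = (1,1,4,2,2,2)` satisfies `Au = b₁ + b₂` but is not
a sum of a lattice point of `π⁻¹(b₁)` and a lattice point of `π⁻¹(b₂)`. -/
theorem oda_type_example :
    ({ u : Fin 6 → ℕ | exA.mulVec u = ![1, 3, 5, 2] } =
      {![1, 0, 0, 3, 0, 2], ![0, 1, 0, 0, 5, 0], ![0, 0, 1, 1, 3, 1]}) ∧
    ({ u : Fin 6 → ℕ | exA.mulVec u = ![5, 10, 10, 6] } =
      {![0, 0, 5, 0, 0, 1], ![1, 2, 2, 0, 1, 0], ![2, 3, 0, 1, 0, 0]}) ∧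
    (exP (![1, 3, 5, 2] + ![5, 10, 10, 6]) =
      exP ![1, 3, 5, 2] + exP ![5, 10, 10, 6]) ∧
    (exA.mulVec ![1, 1, 4, 2, 2, 2] = ![1, 3, 5, 2] + ![5, 10, 10, 6]) ∧
    ¬ ∃ u₁ u₂ : Fin 6 → ℕ, exA.mulVec u₁ = ![1, 3, 5, 2] ∧
        exA.mulVec u₂ = ![5, 10, 10, 6] ∧ ![1, 1, 4, 2, 2, 2] = u₁ + u₂ := by
  refine ⟨latticeFiber_exA_b₁, latticeFiber_exA_b₂, fiberPolytope_exA_b₁_add_b₂, ?_, ?_⟩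
  · exact latticeFiber_exA_b₁_add_b₂.ge (Set.mem_insert _ _)
  · rintro ⟨v, w, hv, hw, h⟩
    exact notMem_latticeFiber_exA_b₁_add_b₂ (Set.mem_add.2 ⟨v, hv, w, hw, h.symm⟩)
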